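/- For every algebraic curvature operator R ∈ S²_B(⋀²ℝⁿ) and every orthonormal basis {e_i} of ℝⁿ, the Ricci tensor and scalar curvature of Q(R) are given by ⟨Ric(Q(R))e_i, e_j⟩ = Σ_{k,l} ⟨Ric(R)e_k, e_l⟩·R_{ikjl} and s(Q(R)) = ‖Ric(R)‖², where R_{ikjl} = ⟨R(e_i ∧ e_k), e_j ∧ e_l⟩ and ‖Ric(R)‖² = tr(Ric(R)²). -/

import Mathlib

open scoped BigOperators
open Matrix Filter

noncomputable section

/-- `so n`: the Lie algebra of real skew-symmetric `n × n` matrices, as a submodule of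
matrices.  It is the model for `⋀²ℝⁿ` under the identification `x ∧ y ↦ x yᵀ - y xᵀ`,
i.e. `(x ∧ y)(z) = ⟨y,z⟩x - ⟨x,z⟩y`. -/
def so (n : ℕ) : Submodule ℝ (Matrix (Fin n) (Fin n) ℝ) where
  carrier := {A | Aᵀ = -A}
  add_mem' := fun {a b} ha hb => by
    simp only [Set.mem_setOf_eq] at *
    rw [Matrix.transpose_add, ha, hb, neg_add]
  zero_mem' := by simp
  smul_mem' := fun c {a} ha => by
    simp only [Set.mem_setOf_eq] at *
    rw [Matrix.transpose_smul, ha, smul_neg]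

lemma mem_so {n : ℕ} {A : Matrix (Fin n) (Fin n) ℝ} : A ∈ so n ↔ Aᵀ = -A := Iff.rfl

lemma so_skew {n : ℕ} (X : so n) : (X.1)ᵀ = -X.1 := mem_so.mp X.2

lemma so_skew' {n : ℕ} (X : so n) (i j : Fin n) : X.1 j i = -X.1 i j := by
  have h := congrFun (congrFun (so_skew X) i) j
  simpa [Matrix.transpose_apply] using h

/-- The Lie bracket (matrix commutator) on `so n`. -/
def brkt {n : ℕ} (X Y : so n) : so n :=
  ⟨X.1 * Y.1 - Y.1 * X.1, by
    rw [mem_so, Matrix.transpose_sub, Matrix.transpose_mul, Matrix.transpose_mul,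
      so_skew X, so_skew Y]
    simp [neg_sub]⟩

/-- The inner product `⟨A, B⟩ = -(1/2) tr (A B)` on `so n ≅ ⋀²ℝⁿ`, for which
`{e_i ∧ e_j : i < j}` is orthonormal. -/
def ip {n : ℕ} (X Y : so n) : ℝ := -(1 / 2) * (X.1 * Y.1).trace

/-- `ip X` as a linear functional. -/
def ipL {n : ℕ} (X : so n) : so n →ₗ[ℝ] ℝ where
  toFun Y := ip X Y
  map_add' Y Z := by
    simp [ip, Matrix.mul_add, Matrix.trace_add]
    ring
  map_smul' c Y := by
    simp [ip, Matrix.mul_smul, Matrix.trace_smul]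
    ring

/-- The wedge `x ∧ y` of two vectors, as an element of `so n`. -/
def wedgeVec {n : ℕ} (x y : Fin n → ℝ) : so n :=
  ⟨Matrix.of fun i j => x i * y j - y i * x j, by
    rw [mem_so]
    ext i j
    simp [Matrix.transpose_apply]
    ring⟩

/-- Index set for the standard orthonormal basis `{e_i ∧ e_j : i < j}` of `so n`. -/
def pairs (n : ℕ) : Finset (Fin n × Fin n) := Finset.univ.filter (fun p => p.1 < p.2)

/-- Standard basis vector of `ℝⁿ`. -/
def stdVec {n : ℕ} (i : Fin n) : Fin n → ℝ := Pi.single i 1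

/-- The standard orthonormal basis element `e_i ∧ e_j` of `so n`. -/
def omegaB {n : ℕ} (p : Fin n × Fin n) : so n := wedgeVec (stdVec p.1) (stdVec p.2)

/-- Hamilton's sharp product `A # B` of self-adjoint endomorphisms of `⋀²ℝⁿ ≅ so n`:
`⟨(A # B)(φ), ψ⟩ = (1/2) Σ_{α,β} ⟨[A ω_α, B ω_β], φ⟩ ⟨[ω_α, ω_β], ψ⟩`
over the orthonormal basis `{ω_α} = {e_i ∧ e_j : i < j}`. -/
def sharp {n : ℕ} (A B : Module.End ℝ (so n)) : Module.End ℝ (so n) :=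
  (1 / 2 : ℝ) • ∑ p ∈ pairs n, ∑ q ∈ pairs n,
    (ipL (brkt (A (omegaB p)) (B (omegaB q)))).smulRight (brkt (omegaB p) (omegaB q))

/-- The bilinear map `Q(A,B) = (1/2)(AB + BA) + A # B`. -/
def Qbil {n : ℕ} (A B : Module.End ℝ (so n)) : Module.End ℝ (so n) :=
  (1 / 2 : ℝ) • (A * B + B * A) + sharp A B

/-- `Q(R) = R² + R # R`. -/
def Qop {n : ℕ} (R : Module.End ℝ (so n)) : Module.End ℝ (so n) := R * R + sharp R R

/-- Self-adjointness of an endomorphism of `so n ≅ ⋀²ℝⁿ`. -/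
def IsSelfAdjointCO {n : ℕ} (R : Module.End ℝ (so n)) : Prop :=
  ∀ X Y : so n, ip (R X) Y = ip X (R Y)

/-- The first Bianchi identity. -/
def SatBianchi {n : ℕ} (R : Module.End ℝ (so n)) : Prop :=
  ∀ x y z w : Fin n → ℝ,
    ip (R (wedgeVec x y)) (wedgeVec z w) + ip (R (wedgeVec y z)) (wedgeVec x w)
      + ip (R (wedgeVec z x)) (wedgeVec y w) = 0

/-- Algebraic curvature operators: self-adjoint endomorphisms of `⋀²ℝⁿ` satisfying the
first Bianchi identity.  `IsACO R` says `R ∈ S²_B(⋀²ℝⁿ)`. -/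
def IsACO {n : ℕ} (R : Module.End ℝ (so n)) : Prop := IsSelfAdjointCO R ∧ SatBianchi R

/-- The Ricci tensor of `R`, `Ric(R)_{ij} = Σ_k ⟨R(e_i ∧ e_k), e_j ∧ e_k⟩`. -/
def RicM {n : ℕ} (R : Module.End ℝ (so n)) : Matrix (Fin n) (Fin n) ℝ :=
  Matrix.of fun i j => ∑ k, ip (R (wedgeVec (stdVec i) (stdVec k))) (wedgeVec (stdVec j) (stdVec k))

/-- The scalar curvature `s(R) = tr Ric(R)`. -/
def scal {n : ℕ} (R : Module.End ℝ (so n)) : ℝ := (RicM R).trace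

/-- `‖Ric(R)‖² = tr (Ric(R)²)`. -/
def ricNormSq {n : ℕ} (R : Module.End ℝ (so n)) : ℝ := (RicM R * RicM R).trace

/-- The traceless Ricci tensor `Ric₀(R)`. -/
def Ric0M {n : ℕ} (R : Module.End ℝ (so n)) : Matrix (Fin n) (Fin n) ℝ :=
  RicM R - (scal R / n) • (1 : Matrix (Fin n) (Fin n) ℝ)

/-- `R` is Einstein if `Ric(R)` is a scalar multiple of the identity of `ℝⁿ`. -/
def IsEinstein {n : ℕ} (R : Module.End ℝ (so n)) : Prop :=
  ∃ c : ℝ, RicM R = c • (1 : Matrix (Fin n) (Fin n) ℝ)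

lemma wedgeEnd_key {n : ℕ} (A B : Matrix (Fin n) (Fin n) ℝ) (M : so n) :
    (A * M.1 * Bᵀ + B * M.1 * Aᵀ)ᵀ = -(A * M.1 * Bᵀ + B * M.1 * Aᵀ) := by
  have hM := so_skew M
  rw [Matrix.transpose_add, Matrix.transpose_mul, Matrix.transpose_mul,
    Matrix.transpose_mul, Matrix.transpose_mul, Matrix.transpose_transpose,
    Matrix.transpose_transpose, hM]
  simp only [Matrix.mul_neg, Matrix.neg_mul, Matrix.mul_assoc, neg_add]
  abel

/-- The wedge `A ∧ B` of two endomorphisms of `ℝⁿ`, as an endomorphism of `⋀²ℝⁿ ≅ so n`: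
`(A ∧ B)(v ∧ w) = (1/2)(Av ∧ Bw + Bv ∧ Aw)`, i.e. `M ↦ (1/2)(A M Bᵀ + B M Aᵀ)`. -/
def wedgeEnd {n : ℕ} (A B : Matrix (Fin n) (Fin n) ℝ) : Module.End ℝ (so n) where
  toFun M := ⟨(1 / 2 : ℝ) • (A * M.1 * Bᵀ + B * M.1 * Aᵀ), by
    rw [mem_so, Matrix.transpose_smul, wedgeEnd_key, smul_neg]⟩
  map_add' M N := by
    apply Subtype.ext
    simp [Matrix.mul_add, Matrix.add_mul, smul_add]
    abel
  map_smul' c M := by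
    apply Subtype.ext
    simp [Matrix.mul_smul, Matrix.smul_mul, smul_smul, mul_comm]

/-- Inner product `⟨A, B⟩ = tr(A ∘ B)` on endomorphisms of `⋀²ℝⁿ` (the Frobenius inner
product for self-adjoint operators). -/
def endIP {n : ℕ} (A B : Module.End ℝ (so n)) : ℝ := LinearMap.trace ℝ ↥(so n) (A * B)

/-- Norm of an endomorphism of `⋀²ℝⁿ` induced by `endIP`. -/
def endNorm {n : ℕ} (A : Module.End ℝ (so n)) : ℝ := Real.sqrt (endIP A A)

/-- Huisken's trilinear form `tri(A,B,C) = tr((AB + BA + 2 A#B) ∘ C) = 2⟨Q(A,B), C⟩`. -/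
def tri {n : ℕ} (A B C : Module.End ℝ (so n)) : ℝ :=
  LinearMap.trace ℝ ↥(so n) ((A * B + B * A + (2 : ℝ) • sharp A B) * C)

/-- The identity component `R_I = (s(R)/(n(n-1))) id ∧ id` of a curvature operator. -/
def compI {n : ℕ} (R : Module.End ℝ (so n)) : Module.End ℝ (so n) :=
  (scal R / ((n : ℝ) * ((n : ℝ) - 1))) • 1

/-- The traceless-Ricci component `R_{Ric₀} = (2/(n-2)) Ric₀(R) ∧ id`. -/
def compRic0 {n : ℕ} (R : Module.End ℝ (so n)) : Module.End ℝ (so n) :=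
  (2 / ((n : ℝ) - 2)) • wedgeEnd (Ric0M R) 1

/-- The Weyl component `R_W = R - R_I - R_{Ric₀}`. -/
def compW {n : ℕ} (R : Module.End ℝ (so n)) : Module.End ℝ (so n) := R - compI R - compRic0 R

/-- The derivative `DQ̃(R)` of the normalized vector field
`Q̃(R) = Q(R) - ‖Ric R‖² R` at `R`, applied to `A`:
`DQ̃(R)(A) = 2Q(R,A) - ‖Ric R‖² A - 2 tr(Ric R · Ric A) R`. -/
def DQt {n : ℕ} (R A : Module.End ℝ (so n)) : Module.End ℝ (so n) :=
  (2 : ℝ) • Qbil R A - ricNormSq R • A - (2 * (RicM R * RicM A).trace) • R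


/-!
Write `R_{ijkl} = ⟨R(e_i ∧ e_j), e_k ∧ e_l⟩`. In these components
`(R²)_{ijkl} = ½ ∑ R_{ijab} R_{klab}`, while completeness of the basis `e_p ∧ e_q` turns the sharp
product into `(R # R)_{ijkl} = ∑ (R_{kmia} R_{mlaj} - R_{mlia} R_{kmaj})`. On contraction, the first
half of `R # R` becomes `∑ Ric_{kl} R_{ikjl}`, and the Bianchi identity says precisely that the
second half cancels the Ricci tensor of `R²`. A further trace gives the scalar curvature. Passing
to an arbitrary orthonormal basis is the basis independence of the trace of a bilinear form.
-/

section OrthonormalFrame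

variable {ι 𝕜 : Type*} [Fintype ι] [DecidableEq ι] [CommRing 𝕜] {u v : ι → ι → 𝕜}

lemma sum_dotProduct_smul_of_orthonormal
    (hv : ∀ i j, v i ⬝ᵥ v j = if i = j then 1 else 0) (x : ι → 𝕜) :
    ∑ k, (x ⬝ᵥ v k) • v k = x := by
  have rows : Matrix.of v * (Matrix.of v)ᵀ = 1 := by
    ext i j
    rw [Matrix.one_apply, ← hv]
    rfl
  have columns : (Matrix.of v)ᵀ * Matrix.of v = 1 := mul_eq_one_comm.mp rows
  calc ∑ k, (x ⬝ᵥ v k) • v k = (Matrix.of v *ᵥ x) ᵥ* Matrix.of v := by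
        rw [Matrix.vecMul_eq_sum]
        simp only [Matrix.mulVec, Matrix.of_apply, dotProduct_comm x]
        rfl
    _ = x := by rw [← Matrix.mulVec_transpose, Matrix.mulVec_mulVec, columns, Matrix.one_mulVec]

lemma sum_apply_mulVec_eq_of_orthonormal
    (hu : ∀ i j, u i ⬝ᵥ u j = if i = j then 1 else 0)
    (hv : ∀ i j, v i ⬝ᵥ v j = if i = j then 1 else 0)
    (A : Matrix ι ι 𝕜) (L : LinearMap.BilinForm 𝕜 (ι → 𝕜)) :
    ∑ k, L (v k) (A *ᵥ v k) = ∑ k, L (u k) (A *ᵥ u k) := by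
  have expand (f : (ι → 𝕜) →ₗ[𝕜] 𝕜) {w : ι → ι → 𝕜}
      (hw : ∀ i j, w i ⬝ᵥ w j = if i = j then 1 else 0) (x : ι → 𝕜) :
      f x = ∑ k, (x ⬝ᵥ w k) * f (w k) := by
    conv_lhs => rw [← sum_dotProduct_smul_of_orthonormal hw x]
    simp only [map_sum, map_smul, smul_eq_mul]
  calc ∑ k, L (v k) (A *ᵥ v k) = ∑ k, ∑ a, (v k ⬝ᵥ u a) * L (u a) (A *ᵥ v k) :=
        Finset.sum_congr rfl fun k _ => expand (L.flip (A *ᵥ v k)) hu (v k)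
    _ = ∑ a, ∑ k, (u a ⬝ᵥ v k) * L (u a) (A *ᵥ v k) := by
        rw [Finset.sum_comm]
        simp only [dotProduct_comm]
    _ = ∑ a, L (u a) (A *ᵥ u a) :=
        Finset.sum_congr rfl fun a _ => (expand (L (u a) ∘ₗ A.mulVecLin) hv (u a)).symm

lemma sum_mulVec_dotProduct_mul_apply_eq_of_orthonormal
    (hu : ∀ i j, u i ⬝ᵥ u j = if i = j then 1 else 0)
    (hv : ∀ i j, v i ⬝ᵥ v j = if i = j then 1 else 0)
    (A : Matrix ι ι 𝕜) (L : LinearMap.BilinForm 𝕜 (ι → 𝕜)) :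
    ∑ k, ∑ l, (A *ᵥ v k ⬝ᵥ v l) * L (v k) (v l) =
      ∑ k, ∑ l, (A *ᵥ u k ⬝ᵥ u l) * L (u k) (u l) := by
  have collapse {w : ι → ι → 𝕜} (hw : ∀ i j, w i ⬝ᵥ w j = if i = j then 1 else 0) :
      ∑ k, ∑ l, (A *ᵥ w k ⬝ᵥ w l) * L (w k) (w l) = ∑ k, L (w k) (A *ᵥ w k) := by
    refine Finset.sum_congr rfl fun k _ => ?_
    conv_rhs => rw [← sum_dotProduct_smul_of_orthonormal hw (A *ᵥ w k)]
    simp only [map_sum, map_smul, smul_eq_mul]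
  rw [collapse hu, collapse hv, sum_apply_mulVec_eq_of_orthonormal hu hv]

end OrthonormalFrame

section Bivectors

variable {n : ℕ}

lemma stdVec_dotProduct_stdVec (i j : Fin n) :
    stdVec i ⬝ᵥ stdVec j = if i = j then (1 : ℝ) else 0 := by
  simp [stdVec, Pi.single_apply, eq_comm]

lemma ip_comm (X Y : so n) : ip X Y = ip Y X := by
  rw [ip, Matrix.trace_mul_comm, ip]

/-- The inner product of `so n` as a bilinear form. -/
def ipForm : LinearMap.BilinForm ℝ (so n) :=
  LinearMap.mk₂ ℝ ip
    (fun X X' Y => by simp [ip, add_mul, mul_add])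
    (fun c X Y => by simp [ip, mul_left_comm])
    (fun X => (ipL X).map_add)
    (fun c X => (ipL X).map_smul c)

lemma ipForm_apply (X Y : so n) : ipForm X Y = ip X Y := rfl

lemma ip_wedgeVec (X : so n) (x y : Fin n → ℝ) : ip X (wedgeVec x y) = x ⬝ᵥ X.1 *ᵥ y := by
  have hwedge : (wedgeVec x y).1 = vecMulVec x y - vecMulVec y x := by
    ext i j
    simp [wedgeVec, vecMulVec_apply]
  have hskew : y ⬝ᵥ X.1 *ᵥ x = -(x ⬝ᵥ X.1 *ᵥ y) := by
    rw [Matrix.dotProduct_mulVec, ← Matrix.mulVec_transpose, so_skew, Matrix.neg_mulVec,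
      neg_dotProduct, dotProduct_comm]
  rw [ip, hwedge, mul_sub, Matrix.trace_sub, Matrix.mul_vecMulVec, Matrix.mul_vecMulVec,
    Matrix.trace_vecMulVec, Matrix.trace_vecMulVec, dotProduct_comm _ y, dotProduct_comm _ x, hskew]
  ring

lemma ip_omegaB (X : so n) (i j : Fin n) : ip X (omegaB (i, j)) = X.1 i j := by
  simp [omegaB, ip_wedgeVec, stdVec]

lemma ip_eq_half_sum (X Y : so n) : ip X Y = 1 / 2 * ∑ a, ∑ b, X.1 a b * Y.1 a b := by
  calc ip X Y = 1 / 2 * (X.1 * (Y.1)ᵀ).trace := by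
        rw [so_skew, mul_neg, Matrix.trace_neg, ip]
        ring
    _ = 1 / 2 * ∑ a, ∑ b, X.1 a b * Y.1 a b := by
        simp only [Matrix.trace, Matrix.diag, Matrix.mul_apply, Matrix.transpose_apply]

lemma wedgeVec_swap (x y : Fin n → ℝ) : wedgeVec y x = -wedgeVec x y := by
  ext i j
  simp [wedgeVec]

lemma omegaB_apply (p : Fin n × Fin n) (a b : Fin n) :
    (omegaB p).1 a b = (if (a, b) = p then 1 else 0) - (if (b, a) = p then 1 else 0) := by
  simp [omegaB, wedgeVec, stdVec, Pi.single_apply, Prod.ext_iff, ← ite_and, and_comm]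

lemma sum_pairs_smul_omegaB (X : so n) : ∑ p ∈ pairs n, X.1 p.1 p.2 • omegaB p = X := by
  ext a b
  have hsum : (∑ p ∈ pairs n, X.1 p.1 p.2 • omegaB p).1 a b =
      (if a < b then X.1 a b else 0) - (if b < a then X.1 b a else 0) := by
    simp [Matrix.sum_apply, omegaB_apply, mul_sub, pairs]
  rw [hsum]
  rcases lt_trichotomy a b with h | rfl | h
  · simp [h, h.asymm]
  · simpa using (self_eq_neg.mp (so_skew' X a a)).symm
  · simp [h, h.asymm, so_skew' X a b]

lemma sum_pairs_mul_smul_apply_omegaB {M : Type*} [AddCommGroup M] [Module ℝ M]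
    (G : so n →ₗ[ℝ] so n →ₗ[ℝ] M) (k m r s : Fin n) :
    ∑ p ∈ pairs n, ∑ q ∈ pairs n,
      ((omegaB p).1 k m * (omegaB q).1 r s) • G (omegaB p) (omegaB q) =
      G (omegaB (k, m)) (omegaB (r, s)) := by
  have symm (p : Fin n × Fin n) (a b : Fin n) : (omegaB p).1 a b = (omegaB (a, b)).1 p.1 p.2 := by
    rw [← ip_omegaB, ip_comm, ip_omegaB]
  conv_rhs => rw [← sum_pairs_smul_omegaB (omegaB (k, m)), ← sum_pairs_smul_omegaB (omegaB (r, s))]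
  simp only [map_sum, map_smul, LinearMap.sum_apply, LinearMap.smul_apply, Finset.smul_sum,
    smul_smul, symm _ k m, symm _ r s]
  rw [Finset.sum_comm]
  simp only [mul_comm]

lemma brkt_swap (X Y : so n) : brkt Y X = -brkt X Y := by
  ext i j
  simp [brkt]

/-- The Lie bracket of `so n` as a bilinear map. -/
def brktₗ : so n →ₗ[ℝ] so n →ₗ[ℝ] so n :=
  LinearMap.mk₂ ℝ brkt
    (fun X X' Y => Subtype.ext <| by
      simp only [brkt, Submodule.coe_add, add_mul, mul_add]
      abel)
    (fun c X Y => Subtype.ext <| by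
      simp only [brkt, Submodule.coe_smul, smul_mul_assoc, mul_smul_comm, smul_sub])
    (fun X Y Y' => Subtype.ext <| by
      simp only [brkt, Submodule.coe_add, add_mul, mul_add]
      abel)
    (fun c X Y => Subtype.ext <| by
      simp only [brkt, Submodule.coe_smul, smul_mul_assoc, mul_smul_comm, smul_sub])

lemma brktₗ_apply (X Y : so n) : brktₗ X Y = brkt X Y := rfl

lemma sum_pairs_brkt_apply_smul {M : Type*} [AddCommGroup M] [Module ℝ M]
    (G : so n →ₗ[ℝ] so n →ₗ[ℝ] M) (k l : Fin n) :
    ∑ p ∈ pairs n, ∑ q ∈ pairs n, (brkt (omegaB p) (omegaB q)).1 k l • G (omegaB p) (omegaB q) =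
      ∑ m, (G (omegaB (k, m)) (omegaB (m, l)) - G (omegaB (m, l)) (omegaB (k, m))) := by
  have entry (p q : Fin n × Fin n) : (brkt (omegaB p) (omegaB q)).1 k l =
      ∑ m, ((omegaB p).1 k m * (omegaB q).1 m l - (omegaB p).1 m l * (omegaB q).1 k m) := by
    simp [brkt, Matrix.mul_apply, Finset.sum_sub_distrib, mul_comm]
  simp only [entry, Finset.sum_smul, ← sum_pairs_mul_smul_apply_omegaB, ← Finset.sum_sub_distrib,
    ← sub_smul]
  exact (Finset.sum_congr rfl fun p _ => Finset.sum_comm).trans Finset.sum_comm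

lemma sharp_apply_apply (A B : Module.End ℝ (so n)) (X : so n) (k l : Fin n) :
    (sharp A B X).1 k l = 1 / 2 * ∑ m,
      (ip X (brkt (A (omegaB (k, m))) (B (omegaB (m, l)))) -
        ip X (brkt (A (omegaB (m, l))) (B (omegaB (k, m))))) := by
  have hsum := sum_pairs_brkt_apply_smul ((brktₗ.compl₁₂ A B).compr₂ (ipForm X)) k l
  simp only [LinearMap.compr₂_apply, LinearMap.compl₁₂_apply, brktₗ_apply, ipForm_apply,
    smul_eq_mul] at hsum
  rw [← hsum]
  simp [sharp, ipL, Matrix.sum_apply, ip_comm X, mul_comm]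

lemma sharp_self_apply_apply (R : Module.End ℝ (so n)) (X : so n) (k l : Fin n) :
    (sharp R R X).1 k l = ∑ m, ip X (brkt (R (omegaB (k, m))) (R (omegaB (m, l)))) := by
  have hneg (Y : so n) : ip X (-Y) = -ip X Y := (ipForm X).map_neg Y
  rw [sharp_apply_apply, Finset.mul_sum]
  refine Finset.sum_congr rfl fun m _ => ?_
  rw [brkt_swap (R (omegaB (k, m))), hneg]
  ring

end Bivectors

section Curvature

variable {n : ℕ} {R : Module.End ℝ (so n)}

/-- The components `R_{ijkl} = ⟨R(e_i ∧ e_j), e_k ∧ e_l⟩` of `R` in the standard basis. With this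
convention the Ricci tensor is the trace over the second and fourth indices. -/
def riemann (R : Module.End ℝ (so n)) (i j k l : Fin n) : ℝ :=
  ip (R (omegaB (i, j))) (omegaB (k, l))

lemma apply_omegaB_apply (R : Module.End ℝ (so n)) (i j k l : Fin n) :
    (R (omegaB (i, j))).1 k l = riemann R i j k l :=
  (ip_omegaB _ k l).symm

lemma riemann_swap_left (R : Module.End ℝ (so n)) (i j k l : Fin n) :
    riemann R j i k l = -riemann R i j k l := by
  rw [← apply_omegaB_apply, omegaB, wedgeVec_swap, map_neg, ← apply_omegaB_apply]
  rfl

lemma riemann_swap_right (R : Module.End ℝ (so n)) (i j k l : Fin n) :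
    riemann R i j l k = -riemann R i j k l := by
  rw [← apply_omegaB_apply, so_skew', apply_omegaB_apply]

lemma riemann_swap_swap (R : Module.End ℝ (so n)) (i j k l : Fin n) :
    riemann R j i l k = riemann R i j k l := by
  rw [riemann_swap_left, riemann_swap_right, neg_neg]

lemma riemann_pair_symm (hR : IsSelfAdjointCO R) (i j k l : Fin n) :
    riemann R i j k l = riemann R k l i j := by
  rw [riemann, hR, ip_comm, riemann]

lemma riemann_bianchi (hR : IsACO R) (i j k l : Fin n) :
    riemann R i j k l + riemann R i k l j + riemann R i l j k = 0 := by
  have hcyc : riemann R l k j i + riemann R k j l i + riemann R j l k i = 0 :=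
    hR.2 (stdVec l) (stdVec k) (stdVec j) (stdVec i)
  have flip (a b c : Fin n) : riemann R i a b c = riemann R c b a i := by
    rw [riemann_pair_symm hR.1, riemann_swap_swap]
  rw [flip j, flip k, flip l]
  linarith

lemma RicM_apply (R : Module.End ℝ (so n)) (i j : Fin n) :
    RicM R i j = ∑ k, riemann R i k j k := rfl

lemma RicM_isSymm (hR : IsSelfAdjointCO R) : (RicM R).IsSymm := by
  refine Matrix.IsSymm.ext fun i j => ?_
  rw [RicM_apply, RicM_apply]
  exact Finset.sum_congr rfl fun k _ => riemann_pair_symm hR j k i k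

lemma riemann_mul {A : Module.End ℝ (so n)} (hA : IsSelfAdjointCO A) (B : Module.End ℝ (so n))
    (i j k l : Fin n) :
    riemann (A * B) i j k l = 1 / 2 * ∑ a, ∑ b, riemann B i j a b * riemann A k l a b := by
  rw [riemann, Module.End.mul_apply, hA, ip_eq_half_sum]
  simp only [apply_omegaB_apply]

lemma RicM_mul_apply {A : Module.End ℝ (so n)} (hA : IsSelfAdjointCO A) (B : Module.End ℝ (so n))
    (i j : Fin n) :
    RicM (A * B) i j = 1 / 2 * ∑ k, ∑ a, ∑ b, riemann B i k a b * riemann A j k a b := by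
  simp only [RicM_apply, riemann_mul hA, Finset.mul_sum]

lemma riemann_sharp_self (R : Module.End ℝ (so n)) (i j k l : Fin n) :
    riemann (sharp R R) i j k l = ∑ m, ∑ a,
      (riemann R k m i a * riemann R m l a j - riemann R m l i a * riemann R k m a j) := by
  rw [riemann, ip_omegaB, sharp_self_apply_apply]
  simp only [ip_comm (omegaB (i, j)), ip_omegaB, brkt, Matrix.sub_apply, Matrix.mul_apply,
    apply_omegaB_apply, Finset.sum_sub_distrib]

lemma sum_riemann_mul_riemann_eq_half_sum (hR : IsACO R) (S : Module.End ℝ (so n)) (i j : Fin n) :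
    ∑ k, ∑ a, ∑ b, riemann R i a k b * riemann S j k a b =
      1 / 2 * ∑ k, ∑ a, ∑ b, riemann R i k a b * riemann S j k a b := by
  have hswap : ∑ k, ∑ a, ∑ b, riemann R i a k b * riemann S j k a b =
      -∑ k, ∑ a, ∑ b, riemann R i b k a * riemann S j k a b := by
    simp only [← Finset.sum_neg_distrib]
    refine Finset.sum_congr rfl fun k _ => ?_
    rw [Finset.sum_comm]
    refine Finset.sum_congr rfl fun b _ => Finset.sum_congr rfl fun a _ => ?_
    rw [riemann_swap_right S j k b a, mul_neg]
  have hbianchi (k a b : Fin n) :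
      riemann R i k a b = riemann R i a k b - riemann R i b k a := by
    linarith [riemann_bianchi hR i k a b, riemann_swap_right R i a k b]
  have hsum : ∑ k, ∑ a, ∑ b, riemann R i k a b * riemann S j k a b =
      ∑ k, ∑ a, ∑ b, riemann R i a k b * riemann S j k a b -
        ∑ k, ∑ a, ∑ b, riemann R i b k a * riemann S j k a b := by
    simp only [← Finset.sum_sub_distrib, ← sub_mul, ← hbianchi]
  linarith

lemma RicM_sharp_self_apply (hR : IsSelfAdjointCO R) (i j : Fin n) :
    RicM (sharp R R) j i = ∑ k, ∑ l, RicM R k l * riemann R i k j l -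
      ∑ k, ∑ a, ∑ b, riemann R j a k b * riemann R i k a b := by
  calc RicM (sharp R R) j i
      = ∑ b, ∑ k, ∑ l, (riemann R i k j l * riemann R k b l b -
          riemann R k b j l * riemann R i k l b) := by
        simp only [RicM_apply, riemann_sharp_self]
    _ = ∑ k, ∑ l, ∑ b, (riemann R i k j l * riemann R k b l b -
          riemann R k b j l * riemann R i k l b) := by
        rw [Finset.sum_comm]
        exact Finset.sum_congr rfl fun k _ => Finset.sum_comm
    _ = _ := by
        simp only [Finset.sum_sub_distrib, ← Finset.mul_sum, ← RicM_apply,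
          riemann_pair_symm hR _ _ j, mul_comm (RicM R _ _)]

lemma RicM_add (A B : Module.End ℝ (so n)) : RicM (A + B) = RicM A + RicM B := by
  ext i j
  simp [RicM_apply, ← apply_omegaB_apply, Finset.sum_add_distrib]

lemma RicM_Qop_apply (hR : IsACO R) (i j : Fin n) :
    RicM (Qop R) j i = ∑ k, ∑ l, RicM R k l * riemann R i k j l := by
  rw [Qop, RicM_add, Matrix.add_apply, RicM_mul_apply hR.1, RicM_sharp_self_apply hR.1,
    sum_riemann_mul_riemann_eq_half_sum hR]
  ring

lemma scal_Qop (hR : IsACO R) : scal (Qop R) = ricNormSq R := by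
  have htrace (k l : Fin n) : ∑ i, riemann R i k i l = RicM R k l :=
    Finset.sum_congr rfl fun i _ => (riemann_swap_swap R i k i l).symm
  calc scal (Qop R) = ∑ i, ∑ k, ∑ l, RicM R k l * riemann R i k i l := by
        simp only [scal, Matrix.trace, Matrix.diag, RicM_Qop_apply hR]
    _ = ∑ k, ∑ l, RicM R k l * ∑ i, riemann R i k i l := by
        simp only [Finset.mul_sum]
        rw [Finset.sum_comm]
        exact Finset.sum_congr rfl fun k _ => Finset.sum_comm
    _ = ∑ k, ∑ l, RicM R k l * RicM R l k := by
        simp only [htrace, (RicM_isSymm hR.1).apply]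
    _ = ricNormSq R := by
        simp only [ricNormSq, Matrix.trace, Matrix.diag, Matrix.mul_apply]

/-- The wedge `x ∧ y` as a bilinear map `ℝⁿ × ℝⁿ → so n`. -/
def wedgeVecₗ : (Fin n → ℝ) →ₗ[ℝ] (Fin n → ℝ) →ₗ[ℝ] so n :=
  have add_left (x x' y : Fin n → ℝ) : wedgeVec (x + x') y = wedgeVec x y + wedgeVec x' y := by
    ext i j
    simp only [wedgeVec, Matrix.of_apply, Pi.add_apply, Submodule.coe_add, Matrix.add_apply]
    ring
  have smul_left (c : ℝ) (x y : Fin n → ℝ) : wedgeVec (c • x) y = c • wedgeVec x y := by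
    ext i j
    simp only [wedgeVec, Matrix.of_apply, Pi.smul_apply, Submodule.coe_smul, Matrix.smul_apply,
      smul_eq_mul]
    ring
  LinearMap.mk₂ ℝ wedgeVec add_left smul_left
    (fun x y y' => by
      rw [← neg_inj, ← wedgeVec_swap, add_left, neg_add, ← wedgeVec_swap, ← wedgeVec_swap])
    (fun c x y => by rw [← neg_inj, ← wedgeVec_swap, smul_left, ← smul_neg, ← wedgeVec_swap])

/-- The bilinear form `(z, w) ↦ ⟨R(x ∧ z), y ∧ w⟩` on `ℝⁿ`. For `x = e_i` and `y = e_j` its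
coefficients are the `R_{ikjl}` against which the Ricci tensor is contracted. -/
def riemannForm (R : Module.End ℝ (so n)) (x y : Fin n → ℝ) : LinearMap.BilinForm ℝ (Fin n → ℝ) :=
  ipForm.compl₁₂ (R ∘ₗ wedgeVecₗ x) (wedgeVecₗ y)

lemma riemannForm_apply (R : Module.End ℝ (so n)) (x y z w : Fin n → ℝ) :
    riemannForm R x y z w = ip (R (wedgeVec x z)) (wedgeVec y w) := rfl

lemma riemannForm_comm (R : Module.End ℝ (so n)) (x y z w : Fin n → ℝ) :
    riemannForm R z w x y = riemannForm R x y z w := by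
  rw [riemannForm_apply, wedgeVec_swap x z, wedgeVec_swap y w, map_neg, riemannForm_apply]
  simp [ip]

lemma RicM_Qop_mulVec_dotProduct (hR : IsACO R) (x y : Fin n → ℝ) :
    RicM (Qop R) *ᵥ x ⬝ᵥ y =
      ∑ k, ∑ l, (RicM R *ᵥ stdVec k ⬝ᵥ stdVec l) * riemannForm R x y (stdVec k) (stdVec l) := by
  have hRic (k l : Fin n) : RicM R *ᵥ stdVec k ⬝ᵥ stdVec l = RicM R k l := by
    simp [stdVec, (RicM_isSymm hR.1).apply]
  have hform : Matrix.toBilin' (RicM (Qop R))ᵀ =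
      ∑ k, ∑ l, RicM R k l • riemannForm R (stdVec k) (stdVec l) := by
    refine LinearMap.BilinForm.ext_basis (Pi.basisFun ℝ (Fin n)) fun i j => ?_
    have hbasis (a : Fin n) : Pi.basisFun ℝ (Fin n) a = stdVec a := Pi.basisFun_apply ℝ (Fin n) a
    have hentry (M : Matrix (Fin n) (Fin n) ℝ) : Matrix.toBilin' M (stdVec i) (stdVec j) = M i j :=
      Matrix.toBilin'_single M i j
    simp only [hbasis, hentry, Matrix.transpose_apply, RicM_Qop_apply hR, LinearMap.sum_apply,
      LinearMap.smul_apply, smul_eq_mul, riemannForm_comm R (stdVec i) (stdVec j)]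
    rfl
  calc RicM (Qop R) *ᵥ x ⬝ᵥ y = Matrix.toBilin' (RicM (Qop R))ᵀ x y := by
        rw [Matrix.toBilin'_apply', Matrix.dotProduct_mulVec, Matrix.vecMul_transpose]
    _ = _ := by
        simp only [hform, hRic, LinearMap.sum_apply, LinearMap.smul_apply, smul_eq_mul,
          riemannForm_comm R x y]

end Curvature

/-- For every `R ∈ S²_B(⋀²ℝⁿ)` and every orthonormal basis `{v i}` of
`ℝⁿ`, `⟨Ric(Q(R)) v_i, v_j⟩ = Σ_{k,l} ⟨Ric(R) v_k, v_l⟩ · R_{ikjl}` where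
`R_{ikjl} = ⟨R(v_i ∧ v_k), v_j ∧ v_l⟩`; and `s(Q(R)) = ‖Ric(R)‖² = tr(Ric(R)²)`. -/
theorem stmt16 (n : ℕ) (R : Module.End ℝ (so n)) (hACO : IsACO R)
    (v : Fin n → (Fin n → ℝ))
    (hv : ∀ i j : Fin n, v i ⬝ᵥ v j = if i = j then (1 : ℝ) else 0) :
    (∀ i j : Fin n,
      (RicM (Qop R)).mulVec (v i) ⬝ᵥ v j =
        ∑ k : Fin n, ∑ l : Fin n,
          ((RicM R).mulVec (v k) ⬝ᵥ v l) *
            ip (R (wedgeVec (v i) (v k))) (wedgeVec (v j) (v l))) ∧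
    scal (Qop R) = ricNormSq R := by
  refine ⟨fun i j => ?_, scal_Qop hACO⟩
  rw [RicM_Qop_mulVec_dotProduct hACO]
  exact sum_mulVec_dotProduct_mul_apply_eq_of_orthonormal hv stdVec_dotProduct_stdVec
    (RicM R) (riemannForm R (v i) (v j))

end
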